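/- arXiv:1106.0404 — 9 statements merged into one kernel-verified Lean document; each statement's English description precedes it below -/
import Mathlib

section
/- Let F be a subfunctor of V that preserves intersections, let X be a compact Hausdorff space, B ⊆ X a closed nonempty subset, and ν ∈ F(X). Then ν ∈ V(i_B)(F(B)) (where i_B : B → X is the inclusion) if and only if ν(φ₁) = ν(φ₂) for every φ₁, φ₂ ∈ C(X) with φ₁|_B = φ₂|_B. -/
open Topology

universe u

/-- `V(X)`: the set of all functionals `ν : C(X, ℝ) → ℝ` (not assumed linear or continuous)
with `min φ(X) ≤ ν(φ) ≤ max φ(X)` for every `φ ∈ C(X)`. -/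
def VSet (X : Type u) [TopologicalSpace X] : Set (C(X, ℝ) → ℝ) :=
  {ν | ∀ φ : C(X, ℝ), sInf (Set.range φ) ≤ ν φ ∧ ν φ ≤ sSup (Set.range φ)}

/-- `V(f)(ν)(ψ) = ν(ψ ∘ f)` for a continuous map `f : X → Y`. -/
def Vmap {X Y : Type u} [TopologicalSpace X] [TopologicalSpace Y] (f : C(X, Y))
    (ν : C(X, ℝ) → ℝ) : C(Y, ℝ) → ℝ :=
  fun ψ => ν (ψ.comp f)

/-- The inclusion of a subset `B ⊆ X` as a continuous map. -/
def inclCM {X : Type u} [TopologicalSpace X] (B : Set X) : C(B, X) :=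
  ⟨Subtype.val, continuous_subtype_val⟩

/-- A subfunctor `F` of the functor `V`: an assignment of a subset `F(X) ⊆ V(X)` to every
compact Hausdorff space `X` such that `V(f)(F(X)) ⊆ F(Y)` for every continuous `f : X → Y`. -/
structure VSubfunctor : Type (u + 1) where
  carrier : ∀ (X : Type u) [TopologicalSpace X] [CompactSpace X] [T2Space X],
    Set (C(X, ℝ) → ℝ)
  subset_V : ∀ (X : Type u) [TopologicalSpace X] [CompactSpace X] [T2Space X],
    carrier X ⊆ VSet X
  map_mem : ∀ (X Y : Type u) [TopologicalSpace X] [CompactSpace X] [T2Space X]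
    [TopologicalSpace Y] [CompactSpace Y] [T2Space Y] (f : C(X, Y)) (ν : C(X, ℝ) → ℝ),
    ν ∈ carrier X → Vmap f ν ∈ carrier Y

/-- `F(B)`, identified with its copy `V(i_B)(F(B)) ⊆ F(X)`, for a closed subset `B` of a
compact Hausdorff space `X`. -/
def VSubfunctor.sub (F : VSubfunctor.{u}) (X : Type u) [TopologicalSpace X] [CompactSpace X]
    [T2Space X] (B : Set X) (hB : IsClosed B) : Set (C(X, ℝ) → ℝ) :=
  haveI : CompactSpace B := isCompact_iff_compactSpace.mp hB.isCompact
  Vmap (inclCM B) '' F.carrier ↥B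

/-- A subfunctor `F` of `V` preserves intersections if `F(⋂ᵢ Sᵢ) = ⋂ᵢ F(Sᵢ)` (under the
identifications above) for every (nonempty) family of closed subsets of a compact Hausdorff
space. -/
def VSubfunctor.PreservesIntersections (F : VSubfunctor.{u}) : Prop :=
  ∀ (X : Type u) [TopologicalSpace X] [CompactSpace X] [T2Space X]
    (ι : Type u) [Nonempty ι] (S : ι → Set X) (hS : ∀ i, IsClosed (S i)),
    F.sub X (⋂ i, S i) (isClosed_iInter hS) = ⋂ i, F.sub X (S i) (hS i)

theorem range_mem_sub (F : VSubfunctor.{u}) (X Y : Type u) [TopologicalSpace X] [CompactSpace X]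
    [T2Space X] [TopologicalSpace Y] [CompactSpace Y] [T2Space Y] (f : C(X, Y))
    (S : Set Y) (hS : IsClosed S) (hf : ∀ x, f x ∈ S)
    (ν : C(X, ℝ) → ℝ) (hν : ν ∈ F.carrier X) : Vmap f ν ∈ F.sub Y S hS := by
  haveI : CompactSpace S := isCompact_iff_compactSpace.mp hS.isCompact
  exact ⟨Vmap (⟨fun x => ⟨f x, hf x⟩, f.continuous.subtype_mk hf⟩ : C(X, S)) ν,
    F.map_mem _ _ _ _ hν, rfl⟩

/-- For a subfunctor `F` of `V` preserving intersections, a compact Hausdorff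
space `X`, a closed nonempty `B ⊆ X` and `ν ∈ F(X)`: `ν ∈ F(B)` (i.e. `ν ∈ V(i_B)(F(B))`) iff
`ν(φ₁) = ν(φ₂)` for all `φ₁, φ₂ ∈ C(X)` which agree on `B`. -/
theorem stmt9 (F : VSubfunctor.{u}) (hint : F.PreservesIntersections)
    (X : Type u) [TopologicalSpace X] [CompactSpace X] [T2Space X]
    (B : Set X) (hB : IsClosed B) (hne : B.Nonempty)
    (ν : C(X, ℝ) → ℝ) (hν : ν ∈ F.carrier X) :
    ν ∈ F.sub X B hB ↔
      ∀ φ₁ φ₂ : C(X, ℝ), Set.EqOn (φ₁ : X → ℝ) (φ₂ : X → ℝ) B → ν φ₁ = ν φ₂ := by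
  constructor
  · rintro ⟨μ, -, rfl⟩ φ₁ φ₂ h
    have : φ₁.comp (inclCM B) = φ₂.comp (inclCM B) := by
      ext b
      exact h b.2
    simp only [Vmap, this]
  · intro h
    -- the double of `X` along `B`, inside a Tychonoff cube over `X`
    let K := {g : C(X, unitInterval) // ∀ x ∈ B, g x = 0}
    let i₁ : C(X, X × (K → unitInterval)) := ⟨fun x => (x, fun _ => 0), by fun_prop⟩
    let i₂ : C(X, X × (K → unitInterval)) := ⟨fun x => (x, fun g => g.1 x),
        continuous_id.prodMk (continuous_pi fun g => g.1.continuous)⟩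
    let S : ULift.{u} Bool → Set (X × (K → unitInterval)) :=
      fun b => if b.down then Set.range i₁ else Set.range i₂
    have hS : ∀ b, IsClosed (S b) := by
      rintro ⟨_ | _⟩
      · exact (isCompact_range i₂.continuous).isClosed
      · exact (isCompact_range i₁.continuous).isClosed
    have heq : Vmap i₁ ν = Vmap i₂ ν := by
      funext ψ
      apply h
      intro x hx
      have : i₁ x = i₂ x := by
        refine Prod.ext rfl ?_
        funext g
        exact (g.2 x hx).symm
      simp [this]
    have hmem : Vmap i₁ ν ∈ ⋂ b, F.sub _ (S b) (hS b) := by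
      refine Set.mem_iInter.2 ?_
      rintro ⟨_ | _⟩
      · rw [heq]
        exact range_mem_sub F _ _ i₂ (Set.range i₂)
          (isCompact_range i₂.continuous).isClosed (fun x => ⟨x, rfl⟩) ν hν
      · exact range_mem_sub F _ _ i₁ (Set.range i₁)
          (isCompact_range i₁.continuous).isClosed (fun x => ⟨x, rfl⟩) ν hν
    rw [← hint] at hmem
    have hSB : ∀ p ∈ ⋂ b, S b, p.1 ∈ B := by
      intro p hp
      obtain ⟨x, hx⟩ : p ∈ Set.range i₁ := Set.mem_iInter.1 hp (ULift.up true)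
      obtain ⟨y, hy⟩ : p ∈ Set.range i₂ := Set.mem_iInter.1 hp (ULift.up false)
      have hxp : x = p.1 := congrArg Prod.fst hx
      have hyp : y = p.1 := congrArg Prod.fst hy
      by_contra hpB
      obtain ⟨f, hf0, hf1, hf⟩ := exists_continuous_zero_one_of_isClosed hB
        (isClosed_singleton (x := p.1)) (Set.disjoint_singleton_right.2 hpB)
      let g : K := ⟨⟨fun x => ⟨f x, hf x⟩, f.continuous.subtype_mk hf⟩,
        fun x hx => Subtype.ext (hf0 hx)⟩
      have h1 : (0 : unitInterval) = p.2 g := congrFun (congrArg Prod.snd hx) g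
      have h2 : (⟨f y, hf y⟩ : unitInterval) = p.2 g := congrFun (congrArg Prod.snd hy) g
      have h3 : f y = 0 := congrArg Subtype.val (h2.trans h1.symm)
      have h4 : f p.1 = 1 := hf1 rfl
      rw [hyp, h4] at h3
      exact one_ne_zero h3
    haveI : CompactSpace B := isCompact_iff_compactSpace.mp hB.isCompact
    haveI : CompactSpace ↥(⋂ b, S b) :=
      isCompact_iff_compactSpace.mp (isClosed_iInter hS).isCompact
    obtain ⟨μ, hμ, hμν⟩ := hmem
    let r : C(↥(⋂ b, S b), B) :=
      ⟨fun p => ⟨p.1.1, hSB p.1 p.2⟩, by fun_prop⟩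
    refine ⟨Vmap r μ, F.map_mem _ _ r μ hμ, ?_⟩
    funext φ
    exact congrFun hμν (φ.comp ⟨Prod.fst, continuous_fst⟩)
end

section
/- Let X be a compact Hausdorff space, B ⊆ X a closed nonempty subset, and ν ∈ EA(X). Then there exists ν₀ ∈ EA(B) with ν(φ) = ν₀(φ|_B) for every φ ∈ C(X) if and only if ν(φ₁) = ν(φ₂) for every φ₁, φ₂ ∈ C(X) with φ₁|_B = φ₂|_B. -/
open Topology

universe u

/-- `EA(X)`: the set of all functionals `ν : C(X, ℝ) → ℝ` (not assumed linear or continuous)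
with `min φ(X) ≤ ν(φ) ≤ max φ(X)` for every `φ ∈ C(X)` which are non-expanding
(`|ν(φ) - ν(ψ)| ≤ ‖φ - ψ‖`) and weakly additive (`ν(φ + c·1_X) = ν(φ) + c`). -/
noncomputable def EASet (X : Type u) [TopologicalSpace X] [CompactSpace X] :
    Set (C(X, ℝ) → ℝ) :=
  {ν | (∀ φ : C(X, ℝ), sInf (Set.range φ) ≤ ν φ ∧ ν φ ≤ sSup (Set.range φ)) ∧
       (∀ φ ψ : C(X, ℝ), |ν φ - ν ψ| ≤ ‖φ - ψ‖) ∧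
       (∀ (φ : C(X, ℝ)) (c : ℝ), ν (φ + ContinuousMap.const X c) = ν φ + c)}

/-- For a compact Hausdorff space `X`, a closed nonempty `B ⊆ X` and
`ν ∈ EA(X)`: there exists `ν₀ ∈ EA(B)` with `ν(φ) = ν₀(φ|_B)` for all `φ ∈ C(X)` iff
`ν(φ₁) = ν(φ₂)` for all `φ₁, φ₂ ∈ C(X)` which agree on `B`. -/
theorem stmt10 (X : Type u) [TopologicalSpace X] [CompactSpace X] [T2Space X]
    (B : Set X) (hB : IsClosed B) (hne : B.Nonempty)
    (ν : C(X, ℝ) → ℝ) (hν : ν ∈ EASet X) :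
    (haveI : CompactSpace B := isCompact_iff_compactSpace.mp hB.isCompact
      ∃ ν₀ ∈ EASet (↥B), ∀ φ : C(X, ℝ), ν φ = ν₀ (φ.restrict B)) ↔
      ∀ φ₁ φ₂ : C(X, ℝ), Set.EqOn (φ₁ : X → ℝ) (φ₂ : X → ℝ) B → ν φ₁ = ν φ₂ := by
  haveI hc : CompactSpace B := isCompact_iff_compactSpace.mp hB.isCompact
  haveI : Nonempty B := hne.to_subtype
  haveI : Nonempty X := ⟨hne.some⟩
  obtain ⟨h1, h2, h3⟩ := hν
  constructor
  · rintro ⟨ν₀, -, h⟩ φ₁ φ₂ he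
    rw [h, h]
    congr 1
    ext x
    exact he x.2
  · intro H
    have hext : ∀ f : C(B, ℝ), ∃ g : C(X, ℝ), g.restrict B = f := fun f =>
      f.exists_restrict_eq hB
    choose e he using hext
    have key : ∀ g : C(X, ℝ), ν (e (g.restrict B)) = ν g := by
      intro g
      apply H
      intro x hx
      exact DFunLike.congr_fun (he (g.restrict B)) ⟨x, hx⟩
    refine ⟨fun f => ν (e f), ⟨?_, ?_, ?_⟩, fun φ => (key φ).symm⟩
    · intro f
      have hcomp : IsCompact (Set.range f) := isCompact_range f.continuous
      have hm : ∀ x, f x ∈ Set.Icc (sInf (Set.range f)) (sSup (Set.range f)) := fun x =>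
        ⟨csInf_le hcomp.bddBelow ⟨x, rfl⟩, le_csSup hcomp.bddAbove ⟨x, rfl⟩⟩
      obtain ⟨g, hg, hgf⟩ := f.exists_restrict_eq_forall_mem_of_closed hm
        ⟨_, hm (Classical.arbitrary B)⟩ hB
      have k := key g
      rw [hgf] at k
      show _ ≤ ν (e f) ∧ ν (e f) ≤ _
      rw [k]
      constructor
      · refine le_trans (le_csInf (Set.range_nonempty _) ?_) (h1 g).1
        rintro _ ⟨x, rfl⟩
        exact (hg x).1
      · refine le_trans (h1 g).2 (csSup_le (Set.range_nonempty _) ?_)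
        rintro _ ⟨x, rfl⟩
        exact (hg x).2
    · intro f k₂
      have hm : ∀ x, (f - k₂) x ∈ Set.Icc (-‖f - k₂‖) ‖f - k₂‖ := fun x =>
        abs_le.mp ((f - k₂).norm_coe_le_norm x)
      obtain ⟨g, hg, hgf⟩ := (f - k₂).exists_restrict_eq_forall_mem_of_closed hm
        ⟨_, hm (Classical.arbitrary B)⟩ hB
      have k : ν (e f) = ν (e k₂ + g) := by
        apply H
        intro x hx
        have a1 := DFunLike.congr_fun (he f) ⟨x, hx⟩
        have a2 := DFunLike.congr_fun (he k₂) ⟨x, hx⟩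
        have a3 := DFunLike.congr_fun hgf ⟨x, hx⟩
        simp only [ContinuousMap.restrict_apply, ContinuousMap.sub_apply,
          ContinuousMap.add_apply] at a1 a2 a3 ⊢
        linarith
      show |ν (e f) - ν (e k₂)| ≤ _
      rw [k]
      refine (h2 _ _).trans ?_
      rw [add_sub_cancel_left]
      exact (ContinuousMap.norm_le _ (norm_nonneg _)).mpr fun x => abs_le.mpr (hg x)
    · intro f c
      show ν (e _) = ν (e f) + c
      rw [← h3]
      apply H
      intro x hx
      have a1 := DFunLike.congr_fun (he f) ⟨x, hx⟩
      have a2 := DFunLike.congr_fun (he (f + ContinuousMap.const B c)) ⟨x, hx⟩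
      simp only [ContinuousMap.restrict_apply, ContinuousMap.add_apply,
        ContinuousMap.const_apply] at a1 a2 ⊢
      linarith
end

section
/- Let f : X → Y be a continuous map of compact Hausdorff spaces and B ⊆ Y a closed nonempty subset such that the restriction of f to f⁻¹(B) is a homeomorphism onto B. Let μ ∈ EA(X) be such that μ(ψ₁ ∘ f) = μ(ψ₂ ∘ f) for all ψ₁, ψ₂ ∈ C(Y) with ψ₁|_B = ψ₂|_B. Then μ(φ₁) = μ(φ₂) for all φ₁, φ₂ ∈ C(X) with φ₁|_{f⁻¹(B)} = φ₂|_{f⁻¹(B)}. (That is, the functor EA preserves 1-preimages.) -/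
open Topology

universe u

theorem ea_mono {X : Type u} [TopologicalSpace X] [CompactSpace X]
    {μ : C(X, ℝ) → ℝ} (hμ : μ ∈ EASet X) (φ ψ : C(X, ℝ)) (hle : ∀ x, φ x ≤ ψ x) :
    μ φ ≤ μ ψ := by
  obtain ⟨-, h2, h3⟩ := hμ
  set c : ℝ := ‖ψ - φ‖ / 2 with hc
  have hc0 : 0 ≤ c := by positivity
  have h4 := h2 (φ + ContinuousMap.const X c) ψ
  have h5 : ‖φ + ContinuousMap.const X c - ψ‖ ≤ c := by
    rw [ContinuousMap.norm_le _ hc0]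
    intro x
    have h6 := ContinuousMap.norm_coe_le_norm (ψ - φ) x
    have h7 := hle x
    simp only [ContinuousMap.sub_apply, ContinuousMap.add_apply, ContinuousMap.const_apply,
      Real.norm_eq_abs] at h6 ⊢
    have h8 := (abs_le.1 h6).2
    rw [abs_le]
    constructor <;> linarith
  rw [h3] at h4
  have h9 := (abs_le.1 (h4.trans h5)).2
  linarith

theorem ea_eq_comp {X Y : Type u} [TopologicalSpace X] [CompactSpace X]
    [TopologicalSpace Y] [CompactSpace Y] [T2Space Y]
    (f : C(X, Y)) (B : Set Y) (hB : IsClosed B)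
    (μ : C(X, ℝ) → ℝ) (hμ : μ ∈ EASet X)
    (h : ∀ ψ₁ ψ₂ : C(Y, ℝ), Set.EqOn (ψ₁ : Y → ℝ) (ψ₂ : Y → ℝ) B →
      μ (ψ₁.comp f) = μ (ψ₂.comp f))
    (φ : C(X, ℝ)) (ψ : C(Y, ℝ)) (he : ∀ x, f x ∈ B → φ x = ψ (f x)) :
    μ φ = μ (ψ.comp f) := by
  have key : ∀ ε : ℝ, 0 < ε → |μ φ - μ (ψ.comp f)| ≤ ε := by
    intro ε hε
    have hK : IsClosed {x | ε ≤ |φ x - ψ (f x)|} :=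
      isClosed_le continuous_const (by fun_prop)
    have hfK : IsClosed (f '' {x | ε ≤ |φ x - ψ (f x)|}) :=
      (hK.isCompact.image f.continuous).isClosed
    have hd : Disjoint B (f '' {x | ε ≤ |φ x - ψ (f x)|}) := by
      rw [Set.disjoint_left]
      rintro y hy ⟨x, hx, rfl⟩
      have hx' : ε ≤ |φ x - ψ (f x)| := hx
      rw [he x hy, sub_self, abs_zero] at hx'
      linarith
    obtain ⟨u, hu0, hu1, hu⟩ := exists_continuous_zero_one_of_isClosed hB hfK hd
    set M : ℝ := ‖φ - ψ.comp f‖ with hM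
    have hM0 : 0 ≤ M := norm_nonneg _
    have bound : ∀ x, |φ x - ψ (f x)| ≤ M * u (f x) + ε := by
      intro x
      by_cases hx : ε ≤ |φ x - ψ (f x)|
      · have h1 : u (f x) = 1 := hu1 ⟨x, hx, rfl⟩
        have h2 := ContinuousMap.norm_coe_le_norm (φ - ψ.comp f) x
        simp only [ContinuousMap.sub_apply, ContinuousMap.comp_apply, Real.norm_eq_abs] at h2
        rw [h1]
        linarith
      · have := mul_nonneg hM0 (hu (f x)).1
        linarith
    have hup := ea_mono hμ φ ((ψ + M • u).comp f + ContinuousMap.const X ε) (by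
      intro x
      have := (abs_le.1 (bound x)).2
      simp
      linarith)
    have hlo := ea_mono hμ ((ψ - M • u).comp f + ContinuousMap.const X (-ε)) φ (by
      intro x
      have := (abs_le.1 (bound x)).1
      simp
      linarith)
    rw [hμ.2.2] at hup hlo
    rw [h (ψ + M • u) ψ (by intro y hy; simp [hu0 hy])] at hup
    rw [h (ψ - M • u) ψ (by intro y hy; simp [hu0 hy])] at hlo
    rw [abs_le]
    constructor <;> linarith
  have h0 : |μ φ - μ (ψ.comp f)| ≤ 0 := le_of_forall_pos_le_add (by simpa using key)
  exact sub_eq_zero.1 (abs_nonpos_iff.1 h0)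

/-- the functor `EA` preserves 1-preimages.  Let `f : X → Y` be a continuous
map of compact Hausdorff spaces and `B ⊆ Y` closed and nonempty with `f|_{f⁻¹(B)}` a
homeomorphism onto `B`.  If `μ ∈ EA(X)` satisfies `μ(ψ₁ ∘ f) = μ(ψ₂ ∘ f)` for all
`ψ₁, ψ₂ ∈ C(Y)` agreeing on `B`, then `μ(φ₁) = μ(φ₂)` for all `φ₁, φ₂ ∈ C(X)` agreeing on
`f⁻¹(B)`. -/
theorem stmt11 (X Y : Type u) [TopologicalSpace X] [CompactSpace X] [T2Space X]
    [TopologicalSpace Y] [CompactSpace Y] [T2Space Y]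
    (f : C(X, Y)) (B : Set Y) (hB : IsClosed B) (hne : B.Nonempty)
    (hhomeo : IsHomeomorph (B.restrictPreimage (f : X → Y)))
    (μ : C(X, ℝ) → ℝ) (hμ : μ ∈ EASet X)
    (h : ∀ ψ₁ ψ₂ : C(Y, ℝ), Set.EqOn (ψ₁ : Y → ℝ) (ψ₂ : Y → ℝ) B →
      μ (ψ₁.comp f) = μ (ψ₂.comp f)) :
    ∀ φ₁ φ₂ : C(X, ℝ), Set.EqOn (φ₁ : X → ℝ) (φ₂ : X → ℝ) ((f : X → Y) ⁻¹' B) →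
      μ φ₁ = μ φ₂ := by
  intro φ₁ φ₂ heq
  let e := hhomeo.homeomorph
  let g : C(B, ℝ) := ⟨fun b => φ₁ (e.symm b).1, by fun_prop⟩
  obtain ⟨ψ, hψ⟩ := ContinuousMap.exists_restrict_eq hB g
  have he : ∀ x, f x ∈ B → φ₁ x = ψ (f x) := by
    intro x hx
    have h1 : ψ (f x) = g ⟨f x, hx⟩ := by rw [← hψ]; rfl
    have h2 : e.symm ⟨f x, hx⟩ = ⟨x, hx⟩ := by
      rw [Homeomorph.symm_apply_eq]; rfl
    rw [h1]
    change _ = φ₁ (e.symm ⟨f x, hx⟩).1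
    rw [h2]
  rw [ea_eq_comp f B hB μ hμ h φ₁ ψ he,
    ea_eq_comp f B hB μ hμ h φ₂ ψ (fun x hx => (heq hx).symm.trans (he x hx))]
end

section
/- Let X = {x, y, s, t} and Y = {a, b, c} be finite discrete spaces and f : X → Y the map with f(x) = a, f(y) = b, f(s) = f(t) = c. There exists a functional ν̃ : C(X) → ℝ that is non-expanding and satisfies min φ(X) ≤ ν̃(φ) ≤ max φ(X) for all φ (i.e. ν̃ ∈ E(X)), such that: (1) ν̃(ψ₁ ∘ f) = ν̃(ψ₂ ∘ f) for all ψ₁, ψ₂ : Y → ℝ with ψ₁(a) = ψ₂(a) and ψ₁(b) = ψ₂(b); and (2) there exist φ₁, φ₂ : X → ℝ with φ₁(x) = φ₂(x) and φ₁(y) = φ₂(y) but ν̃(φ₁) ≠ ν̃(φ₂). Consequently, the functor E of non-expanding functionals does not preserve 1-preimages. -/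
open Topology

/-- The map `f : X → Y` between the discrete spaces `X = {x, y, s, t}` (encoded as `Fin 4`,
with `x = 0`, `y = 1`, `s = 2`, `t = 3`) and `Y = {a, b, c}` (encoded as `Fin 3`, with
`a = 0`, `b = 1`, `c = 2`), given by `f(x) = a`, `f(y) = b`, `f(s) = f(t) = c`. -/
def fmap : Fin 4 → Fin 3 := ![0, 1, 2, 2]

/-- there is a functional `ν̃ ∈ E(X)` on the four-point discrete space `X`
(non-expanding, with `min φ(X) ≤ ν̃(φ) ≤ max φ(X)`; functions `X → ℝ` are exactly the
elements of `C(X)` and the sup-norm is `max_{p ∈ X} |φ(p)|`) such that `E(f)(ν̃) ∈ E({a,b})`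
but `ν̃ ∉ E({x,y}) = E(f⁻¹({a,b}))`.  Consequently the functor `E` of non-expanding
functionals does not preserve 1-preimages. -/
theorem stmt12 :
    ∃ ν : (Fin 4 → ℝ) → ℝ,
      (∀ φ ψ : Fin 4 → ℝ, |ν φ - ν ψ| ≤ ⨆ p, |φ p - ψ p|) ∧
      (∀ φ : Fin 4 → ℝ, (⨅ p, φ p) ≤ ν φ ∧ ν φ ≤ ⨆ p, φ p) ∧
      (∀ ψ₁ ψ₂ : Fin 3 → ℝ, ψ₁ 0 = ψ₂ 0 → ψ₁ 1 = ψ₂ 1 →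
        ν (ψ₁ ∘ fmap) = ν (ψ₂ ∘ fmap)) ∧
      (∃ φ₁ φ₂ : Fin 4 → ℝ, φ₁ 0 = φ₂ 0 ∧ φ₁ 1 = φ₂ 1 ∧ ν φ₁ ≠ ν φ₂) := by
  -- the median of `φ x`, `φ y` and `|φ s - φ t| / 2`
  refine ⟨fun φ => max (min (φ 0) (φ 1)) (min (max (φ 0) (φ 1)) (|φ 2 - φ 3| / 2)),
    ?_, ?_, ?_, ?_⟩
  · intro φ ψ
    have hM : ∀ p, |φ p - ψ p| ≤ ⨆ p, |φ p - ψ p| := fun p =>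
      le_ciSup (f := fun p => |φ p - ψ p|) (Set.finite_range _).bddAbove p
    have h0 := hM 0
    have h1 := hM 1
    have h2 := hM 2
    have h3 := hM 3
    generalize (⨆ p, |φ p - ψ p|) = M at *
    have hk : |(|φ 2 - φ 3| / 2) - (|ψ 2 - ψ 3| / 2)| ≤ M := by
      have := abs_abs_sub_abs_le (φ 2 - φ 3) (ψ 2 - ψ 3)
      have h4 : |(φ 2 - φ 3) - (ψ 2 - ψ 3)| ≤ 2 * M := by
        rw [abs_le] at *
        constructor <;> linarith
      rw [← sub_div, abs_div, abs_two]
      linarith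
    refine (abs_max_sub_max_le_max _ _ _ _).trans (max_le ?_ ?_)
    · exact (abs_min_sub_min_le_max _ _ _ _).trans (max_le h0 h1)
    · exact (abs_min_sub_min_le_max _ _ _ _).trans
        (max_le ((abs_max_sub_max_le_max _ _ _ _).trans (max_le h0 h1)) hk)
  · intro φ
    have hl : ∀ p, (⨅ p, φ p) ≤ φ p := fun p => ciInf_le (Set.finite_range _).bddBelow p
    have hu : ∀ p, φ p ≤ ⨆ p, φ p := fun p => le_ciSup (Set.finite_range _).bddAbove p
    constructor
    · exact le_max_of_le_left (le_min (hl 0) (hl 1))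
    · exact max_le (min_le_of_left_le (hu 0)) (min_le_of_left_le (max_le (hu 0) (hu 1)))
  · intro ψ₁ ψ₂ h0 h1
    simp [fmap, h0, h1]
  · refine ⟨![-1, 1, 0, 0], ![-1, 1, 1, -1], by simp, by simp, ?_⟩
    change max (min (-1 : ℝ) 1) (min (max (-1) 1) (|(0 : ℝ) - 0| / 2)) ≠
      max (min (-1 : ℝ) 1) (min (max (-1) 1) (|(1 : ℝ) - (-1)| / 2))
    norm_num
end

section
/- Let F be a subfunctor of V that preserves intersections and such that F(Z) is a convex subset of the real vector space of all functionals C(Z) → ℝ for every compact Hausdorff space Z. Then F is strongly convex: for every compact Hausdorff space X and every closed nonempty A ⊆ X, every element of F(X) that lies in the affine hull of V(i_A)(F(A)) (taken in the vector space of all functionals C(X) → ℝ) already lies in V(i_A)(F(A)); equivalently, (F(X) \ F(A)) ∩ aff F(A) = ∅. -/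
open Topology

universe u

theorem sub_of_mem (F : VSubfunctor.{u}) (X Y : Type u) [TopologicalSpace X] [CompactSpace X]
    [T2Space X] [TopologicalSpace Y] [CompactSpace Y] [T2Space Y] (f : C(X, Y)) (B : Set Y)
    (hB : IsClosed B) (hf : ∀ x, f x ∈ B) (ν : C(X, ℝ) → ℝ) (hν : ν ∈ F.carrier X) :
    Vmap f ν ∈ F.sub Y B hB := by
  have : CompactSpace B := isCompact_iff_compactSpace.mp hB.isCompact
  exact ⟨Vmap (⟨fun x => ⟨f x, hf x⟩, by fun_prop⟩ : C(X, B)) ν, F.map_mem _ _ _ _ hν, rfl⟩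

theorem sub_map (F : VSubfunctor.{u}) (X Y : Type u) [TopologicalSpace X] [CompactSpace X]
    [T2Space X] [TopologicalSpace Y] [CompactSpace Y] [T2Space Y] (f : C(Y, X)) (B : Set Y)
    (hB : IsClosed B) (A : Set X) (hA : IsClosed A) (hf : ∀ y ∈ B, f y ∈ A)
    (ν : C(Y, ℝ) → ℝ) (hν : ν ∈ F.sub Y B hB) :
    Vmap f ν ∈ F.sub X A hA := by
  have : CompactSpace B := isCompact_iff_compactSpace.mp hB.isCompact
  obtain ⟨η, hη, rfl⟩ := hν
  exact sub_of_mem F B X (f.comp (inclCM B)) A hA (fun y => hf y y.2) η hη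

theorem affine_dep (F : VSubfunctor.{u}) (X : Type u) [TopologicalSpace X] [CompactSpace X]
    [T2Space X] (A : Set X) (hA : IsClosed A) (ν : C(X, ℝ) → ℝ)
    (haff : ν ∈ affineSpan ℝ (F.sub X A hA)) (φ ψ : C(X, ℝ)) (h : ∀ x ∈ A, φ x = ψ x) :
    ν φ = ν ψ := by
  refine affineSpan_induction (p := fun μ : C(X, ℝ) → ℝ => μ φ = μ ψ) haff ?_ ?_
  · rintro _ ⟨η, -, rfl⟩
    have : φ.comp (inclCM A) = ψ.comp (inclCM A) := by
      ext x
      exact h x x.2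
    simp only [Vmap, this]
  · intro c u v w hu hv hw
    simp [hu, hv, hw]

/-- every convex subfunctor `F` of `V` which preserves intersections is strongly
convex: for every compact Hausdorff `X` and closed nonempty `A ⊆ X`, every element of `F(X)`
lying in the affine hull of `F(A) = V(i_A)(F(A))` (taken in the real vector space of all
functionals `C(X) → ℝ`) already lies in `F(A)`; i.e. `(F(X) \ F(A)) ∩ aff F(A) = ∅`. -/
theorem stmt13 (F : VSubfunctor.{u}) (hint : F.PreservesIntersections)
    (hconv : ∀ (Z : Type u) [TopologicalSpace Z] [CompactSpace Z] [T2Space Z],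
      Convex ℝ (F.carrier Z))
    (X : Type u) [TopologicalSpace X] [CompactSpace X] [T2Space X]
    (A : Set X) (hA : IsClosed A) (hne : A.Nonempty)
    (ν : C(X, ℝ) → ℝ) (hν : ν ∈ F.carrier X)
    (haff : ν ∈ affineSpan ℝ (F.sub X A hA)) :
    ν ∈ F.sub X A hA := by
  classical
  let J := {f : C(X, unitInterval) // ∀ x ∈ A, f x = 0}
  let Y := X × (J → unitInterval)
  let i₁ : C(X, Y) := ⟨fun x => (x, fun f => f.1 x),
    continuous_id.prodMk (continuous_pi fun f => f.1.continuous)⟩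
  let i₂ : C(X, Y) := ⟨fun x => (x, fun _ => 0), by fun_prop⟩
  let p : C(Y, X) := ⟨Prod.fst, continuous_fst⟩
  let S : ULift.{u} Bool → Set Y := fun b => if b.down then Set.range i₁ else Set.range i₂
  have hS : ∀ b, IsClosed (S b) := by
    rintro ⟨_ | _⟩
    · exact (isCompact_range i₂.continuous).isClosed
    · exact (isCompact_range i₁.continuous).isClosed
  have heq : Vmap i₁ ν = Vmap i₂ ν := by
    funext ψ
    refine affine_dep F X A hA ν haff _ _ fun x hx => ?_
    have : i₁ x = i₂ x := Prod.ext rfl (funext fun f => f.2 x hx)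
    exact congrArg ψ this
  have hmem : Vmap i₁ ν ∈ F.sub Y (⋂ b, S b) (isClosed_iInter hS) := by
    rw [hint Y (ULift.{u} Bool) S hS, Set.mem_iInter]
    rintro ⟨_ | _⟩
    · rw [heq]
      exact sub_of_mem F X Y i₂ (S (ULift.up false)) (hS _) (fun x => Set.mem_range_self x) ν hν
    · exact sub_of_mem F X Y i₁ (S (ULift.up true)) (hS _) (fun x => Set.mem_range_self x) ν hν
  refine sub_map F X Y p _ _ A hA ?_ _ hmem
  intro y hy
  rw [Set.mem_iInter] at hy
  obtain ⟨a, rfl⟩ : y ∈ Set.range i₁ := hy (ULift.up true)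
  obtain ⟨b, hb⟩ : i₁ a ∈ Set.range i₂ := hy (ULift.up false)
  change a ∈ A
  by_contra ha
  obtain ⟨g, hg0, hg1, hg⟩ := exists_continuous_zero_one_of_isClosed hA
    (isClosed_singleton (x := a)) (Set.disjoint_singleton_right.2 ha)
  let f : J := ⟨⟨fun x => ⟨g x, hg x⟩, by fun_prop⟩, fun x hx => Subtype.ext (hg0 hx)⟩
  have h1 : (0 : unitInterval) = f.1 a := congrFun (congrArg Prod.snd hb) f
  have h2 : (0 : ℝ) = g a := congrArg Subtype.val h1
  have h3 : g a = 1 := hg1 rfl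
  rw [h3] at h2
  exact zero_ne_one h2
end

section
/- Let X be a compact Hausdorff space and A ⊆ X a closed nonempty subset. Suppose ν ∈ EA(X) can be written as an affine combination ν = Σ_{i=1}^n t_i ν_i with t_i ∈ ℝ, Σ_{i=1}^n t_i = 1, where each ν_i ∈ EA(X) satisfies ν_i(φ₁) = ν_i(φ₂) for all φ₁, φ₂ ∈ C(X) with φ₁|_A = φ₂|_A. Then there exists ν₀ ∈ EA(A) with ν(φ) = ν₀(φ|_A) for every φ ∈ C(X). -/
open Topology

universe u

/-- let `X` be a compact Hausdorff space and `A ⊆ X` closed and nonempty.  If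
`ν ∈ EA(X)` is an affine combination `ν = ∑ tᵢ νᵢ` (pointwise, with `∑ tᵢ = 1`) of
functionals `νᵢ ∈ EA(X)` each of which satisfies `νᵢ(φ₁) = νᵢ(φ₂)` whenever `φ₁, φ₂ ∈ C(X)`
agree on `A`, then there exists `ν₀ ∈ EA(A)` with `ν(φ) = ν₀(φ|_A)` for every `φ ∈ C(X)`. -/
theorem stmt14 (X : Type u) [TopologicalSpace X] [CompactSpace X] [T2Space X]
    (A : Set X) (hA : IsClosed A) (hne : A.Nonempty)
    (ν : C(X, ℝ) → ℝ) (hν : ν ∈ EASet X)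
    (n : ℕ) (t : Fin n → ℝ) (νs : Fin n → (C(X, ℝ) → ℝ))
    (ht : ∑ i, t i = 1)
    (hmem : ∀ i, νs i ∈ EASet X)
    (hconst : ∀ (i : Fin n) (φ₁ φ₂ : C(X, ℝ)),
      Set.EqOn (φ₁ : X → ℝ) (φ₂ : X → ℝ) A → νs i φ₁ = νs i φ₂)
    (hsum : ∀ φ : C(X, ℝ), ν φ = ∑ i, t i * νs i φ) :
    haveI : CompactSpace A := isCompact_iff_compactSpace.mp hA.isCompact
    ∃ ν₀ ∈ EASet (↥A), ∀ φ : C(X, ℝ), ν φ = ν₀ (φ.restrict A) := by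
  haveI : CompactSpace A := isCompact_iff_compactSpace.mp hA.isCompact
  haveI : Nonempty A := hne.to_subtype
  haveI : Nonempty X := ⟨hne.some⟩
  have hdet : ∀ φ₁ φ₂ : C(X, ℝ), φ₁.restrict A = φ₂.restrict A → ν φ₁ = ν φ₂ := by
    intro φ₁ φ₂ h
    rw [hsum, hsum]
    refine Finset.sum_congr rfl fun i _ => ?_
    rw [hconst i φ₁ φ₂]
    intro x hx
    exact DFunLike.congr_fun h (⟨x, hx⟩ : A)
  have hemb : IsClosedEmbedding (Subtype.val : A → X) := hA.isClosedEmbedding_subtypeVal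
  have hnorm : ∀ f : C(A, ℝ), ∃ g : C(X, ℝ), ‖g‖ = ‖f‖ ∧ g.restrict A = f := by
    intro f
    obtain ⟨g, hg, hgf⟩ :=
      BoundedContinuousFunction.exists_extension_norm_eq_of_isClosedEmbedding
        (BoundedContinuousFunction.mkOfCompact f) hemb
    refine ⟨g.toContinuousMap, ?_, ?_⟩
    · rw [BoundedContinuousFunction.norm_toContinuousMap_eq, hg,
        BoundedContinuousFunction.norm_mkOfCompact]
    · ext x
      exact congrFun hgf x
  have hext : ∀ f : C(A, ℝ), ∃ g : C(X, ℝ),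
      (∀ y, ∃ x₁ x₂, g y ∈ Set.Icc (f x₁) (f x₂)) ∧ g.restrict A = f := by
    intro f
    obtain ⟨g, hg, hgf⟩ :=
      BoundedContinuousFunction.exists_extension_forall_exists_le_ge_of_isClosedEmbedding
        (BoundedContinuousFunction.mkOfCompact f) hemb
    refine ⟨g.toContinuousMap, hg, ?_⟩
    ext x
    exact congrFun hgf x
  choose E hE hEr using hext
  obtain ⟨h1, h2, h3⟩ := hν
  refine ⟨fun f => ν (E f), ⟨?_, ?_, ?_⟩, fun φ => hdet _ _ (hEr _).symm⟩
  · intro f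
    have hc : IsCompact (Set.range f) := isCompact_range f.continuous
    constructor
    · refine le_trans ?_ (h1 (E f)).1
      refine le_csInf (Set.range_nonempty _) ?_
      rintro _ ⟨y, rfl⟩
      obtain ⟨x₁, x₂, h⟩ := hE f y
      exact (csInf_le hc.bddBelow ⟨x₁, rfl⟩).trans h.1
    · refine le_trans (h1 (E f)).2 ?_
      refine csSup_le (Set.range_nonempty _) ?_
      rintro _ ⟨y, rfl⟩
      obtain ⟨x₁, x₂, h⟩ := hE f y
      exact h.2.trans (le_csSup hc.bddAbove ⟨x₂, rfl⟩)
  · intro f g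
    obtain ⟨d, hd, hdr⟩ := hnorm (f - g)
    have : ν (E f) = ν (E g + d) := by
      apply hdet
      rw [hEr]
      ext x
      have e1 := DFunLike.congr_fun (hEr g) x
      have e2 := DFunLike.congr_fun hdr x
      simp only [ContinuousMap.restrict_apply, ContinuousMap.sub_apply,
        ContinuousMap.add_apply] at e1 e2 ⊢
      rw [e1, e2]; ring
    have h := h2 (E g + d) (E g)
    rw [add_sub_cancel_left, hd] at h
    simpa only [this] using h
  · intro f c
    change ν (E (f + ContinuousMap.const A c)) = ν (E f) + c
    rw [← h3]
    apply hdet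
    rw [hEr]
    ext x
    have e1 := DFunLike.congr_fun (hEr f) x
    simp only [ContinuousMap.restrict_apply, ContinuousMap.add_apply,
      ContinuousMap.const_apply] at e1 ⊢
    rw [e1]
end

section
/- Let X = {x, y, s, t} be a four-point discrete space and A = {φ : X → ℝ : φ(s) = φ(t)}. Define ν : A → ℝ by: ν(φ) = min{φ(x), φ(y)} if φ(x) ≥ 0 and φ(y) ≥ 0; ν(φ) = max{φ(x), φ(y)} if φ(x) ≤ 0 and φ(y) ≤ 0; and ν(φ) = 0 otherwise. Then ν is non-expanding on A, i.e. |ν(φ) − ν(ψ)| ≤ max_{p ∈ X} |φ(p) − ψ(p)| for all φ, ψ ∈ A, and moreover min_{p ∈ X} φ(p) ≤ ν(φ) ≤ max_{p ∈ X} φ(p) for all φ ∈ A. -/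
open Topology

/-- The functional `ν` on `A = {φ : X → ℝ : φ(s) = φ(t)}`, where `X = {x, y, s, t}` is the
four-point discrete space (encoded as `Fin 4` with `x = 0`, `y = 1`, `s = 2`, `t = 3`):
`ν(φ) = min {φ(x), φ(y)}` if `φ(x), φ(y) ≥ 0`; `ν(φ) = max {φ(x), φ(y)}` if
`φ(x), φ(y) ≤ 0`; and `ν(φ) = 0` otherwise. -/
noncomputable def nu0 (φ : Fin 4 → ℝ) : ℝ :=
  if 0 ≤ φ 0 ∧ 0 ≤ φ 1 then min (φ 0) (φ 1)
  else if φ 0 ≤ 0 ∧ φ 1 ≤ 0 then max (φ 0) (φ 1)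
  else 0

/-- `ν` is non-expanding on `A = {φ : φ(s) = φ(t)}` and satisfies
`min_{p ∈ X} φ(p) ≤ ν(φ) ≤ max_{p ∈ X} φ(p)` there. -/
theorem stmt15 :
    (∀ φ ψ : Fin 4 → ℝ, φ 2 = φ 3 → ψ 2 = ψ 3 →
      |nu0 φ - nu0 ψ| ≤ ⨆ p, |φ p - ψ p|) ∧
    (∀ φ : Fin 4 → ℝ, φ 2 = φ 3 → (⨅ p, φ p) ≤ nu0 φ ∧ nu0 φ ≤ ⨆ p, φ p) := by
  refine ⟨fun φ ψ _ _ => ?_, fun φ _ => ⟨?_, ?_⟩⟩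
  · have h0 : |φ 0 - ψ 0| ≤ ⨆ p, |φ p - ψ p| :=
      le_ciSup (f := fun p => |φ p - ψ p|) (Set.finite_range _).bddAbove 0
    have h1 : |φ 1 - ψ 1| ≤ ⨆ p, |φ p - ψ p| :=
      le_ciSup (f := fun p => |φ p - ψ p|) (Set.finite_range _).bddAbove 1
    generalize (⨆ p, |φ p - ψ p|) = M at *
    rw [abs_le] at *
    unfold nu0
    grind
  · have h0 : (⨅ p, φ p) ≤ φ 0 := ciInf_le (Set.finite_range _).bddBelow 0
    have h1 : (⨅ p, φ p) ≤ φ 1 := ciInf_le (Set.finite_range _).bddBelow 1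
    generalize (⨅ p, φ p) = M at *
    unfold nu0
    grind
  · have h0 : φ 0 ≤ ⨆ p, φ p := le_ciSup (Set.finite_range _).bddAbove 0
    have h1 : φ 1 ≤ ⨆ p, φ p := le_ciSup (Set.finite_range _).bddAbove 1
    generalize (⨆ p, φ p) = M at *
    unfold nu0
    grind
end

section
/- Let X = {x, y, s, t} be a four-point discrete space, A = {φ : X → ℝ : φ(s) = φ(t)}, and let ν : A → ℝ be defined by: ν(φ) = min{φ(x), φ(y)} if φ(x) ≥ 0 and φ(y) ≥ 0; ν(φ) = max{φ(x), φ(y)} if φ(x) ≤ 0 and φ(y) ≤ 0; and ν(φ) = 0 otherwise. Let ψ : X → ℝ be given by ψ(x) = 1, ψ(y) = −1, ψ(s) = 0, ψ(t) = 4. Then the extension of ν to A ∪ {ψ} assigning the value −1 to ψ is non-expanding: |−1 − ν(φ)| ≤ max_{p ∈ X} |ψ(p) − φ(p)| for every φ ∈ A; moreover min_{p ∈ X} ψ(p) ≤ −1 ≤ max_{p ∈ X} ψ(p). -/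
open Topology

/-- The function `ψ : X → ℝ` with `ψ(x) = 1`, `ψ(y) = -1`, `ψ(s) = 0`, `ψ(t) = 4`. -/
noncomputable def psi16 : Fin 4 → ℝ := ![1, -1, 0, 4]

/-- extending `ν` to `A ∪ {ψ}` by assigning the value `-1` to `ψ` yields a
non-expanding functional, and `min_{p ∈ X} ψ(p) ≤ -1 ≤ max_{p ∈ X} ψ(p)`. -/
theorem stmt16 :
    (∀ φ : Fin 4 → ℝ, φ 2 = φ 3 → |(-1 : ℝ) - nu0 φ| ≤ ⨆ p, |psi16 p - φ p|) ∧
    ((⨅ p, psi16 p) ≤ -1 ∧ (-1 : ℝ) ≤ ⨆ p, psi16 p) := by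
  have bdd : ∀ f : Fin 4 → ℝ, BddAbove (Set.range f) := fun f => (Set.finite_range f).bddAbove
  refine ⟨?_, ?_, ?_⟩
  · intro φ h
    have key := fun p => le_ciSup (bdd (fun p => |psi16 p - φ p|)) p
    have h0 := key 0
    have h1 := key 1
    have h2 := key 2
    have h3 := key 3
    generalize (⨆ p, |psi16 p - φ p|) = M at *
    simp [psi16] at h0 h1 h2 h3
    rw [abs_le] at h0 h1 h2 h3 ⊢
    unfold nu0
    split_ifs with ha hb
    · have := min_le_right (φ 0) (φ 1)
      have := le_min ha.1 ha.2
      constructor <;> linarith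
    · have := le_max_left (φ 0) (φ 1)
      have := max_le hb.1 hb.2
      constructor <;> linarith
    · constructor <;> linarith
  · exact (ciInf_le (Set.finite_range psi16).bddBelow 1).trans (by simp [psi16])
  · exact le_trans (by simp [psi16]) (le_ciSup (bdd psi16) 1)
end

section
/- Let f : X → Y be a continuous open surjection of compact Hausdorff spaces and let φ : X → ℝ be continuous. Then the function ψ' : Y → ℝ defined by ψ'(y) = max φ(f⁻¹(y)) (the maximum exists since f⁻¹(y) is a nonempty compact set) is continuous. -/
open Topology

universe u

/-- if `f : X → Y` is a continuous open surjection of compact Hausdorff spaces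
and `φ : X → ℝ` is continuous, then `ψ'(y) = max φ(f⁻¹(y))` is continuous (the maximum is the
supremum of `φ` over the nonempty compact fiber `f⁻¹(y)`). -/
theorem stmt17 (X Y : Type u) [TopologicalSpace X] [CompactSpace X] [T2Space X]
    [TopologicalSpace Y] [CompactSpace Y] [T2Space Y]
    (f : X → Y) (hf : Continuous f) (hopen : IsOpenMap f) (hsurj : Function.Surjective f)
    (φ : X → ℝ) (hφ : Continuous φ) :
    Continuous fun y : Y => sSup (φ '' (f ⁻¹' {y})) := by
  have hmax : ∀ y, ∃ x, f x = y ∧ sSup (φ '' (f ⁻¹' {y})) = φ x ∧ ∀ z, f z = y → φ z ≤ φ x := by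
    intro y
    have hc : IsCompact (f ⁻¹' {y}) := (isClosed_singleton.preimage hf).isCompact
    have hne : (f ⁻¹' {y}).Nonempty := hsurj y
    obtain ⟨x, hx, h1, h2⟩ := hc.exists_sSup_image_eq_and_ge hne hφ.continuousOn
    exact ⟨x, hx, h1, fun z hz => h2 z hz⟩
  rw [OrderTopology.topology_eq_generate_intervals (α := ℝ), continuous_generateFrom_iff]
  rintro s ⟨a, rfl | rfl⟩
  · have h : (fun y : Y => sSup (φ '' (f ⁻¹' {y}))) ⁻¹' Set.Ioi a = f '' (φ ⁻¹' Set.Ioi a) := by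
      ext y
      obtain ⟨x, hx, h1, h2⟩ := hmax y
      simp only [Set.mem_preimage, Set.mem_Ioi, Set.mem_image, h1]
      exact ⟨fun h => ⟨x, h, hx⟩, fun ⟨z, hz, hy⟩ => hz.trans_le (h2 z hy)⟩
    rw [h]
    exact hopen _ (isOpen_Ioi.preimage hφ)
  · have h : (fun y : Y => sSup (φ '' (f ⁻¹' {y}))) ⁻¹' Set.Iio a
        = (f '' (φ ⁻¹' Set.Ici a))ᶜ := by
      ext y
      obtain ⟨x, hx, h1, h2⟩ := hmax y
      simp only [Set.mem_preimage, Set.mem_Iio, Set.mem_compl_iff, Set.mem_image, Set.mem_Ici, h1]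
      exact ⟨fun h ⟨z, hz, hy⟩ => absurd (h2 z hy) (not_le.2 (h.trans_le hz)),
        fun h => not_le.1 fun h' => h ⟨x, h', hx⟩⟩
    rw [h]
    exact (hf.isClosedMap _ (isClosed_Ici.preimage hφ)).isOpen_compl
end
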